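/- Let K be an algebraically closed field, R = K[x_1, ..., x_d] a polynomial ring, and G = ⟨g_1, ..., g_a⟩ a finite group with a ≤ d acting linearly on R by g_i(x_j) = x_j if j ≠ i and g_i(x_i) = ω_i x_i, where ω_i ∈ K is a primitive d_i-th root of unity with d_i ≥ 1. Let I_G be the Derksen ideal of this action in S = K[x_1, ..., x_d, y_1, ..., y_d]. Then I_G^{(n)} = I_G^n for every n ≥ 1. -/

import Mathlib

/-!
The group acts through diagonal matrices `ζ = (ζ₁, …, ζ_d)`. Each generator rescales a single
variable, so the matrices that occur fill a whole box `∏ᵢ Zᵢ` with finite sides `Zᵢ ⊆ K`.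
Intersecting the linear primes `(yᵢ - ζᵢ xᵢ)` over the box one variable at a time shows that the
Derksen ideal is generated by the regular sequence `fᵢ = ∏_{η ∈ Zᵢ} (yᵢ - η xᵢ)`.

For an ideal `I` generated by a regular sequence, `Iᵐ / Iᵐ⁺¹` is free over `A / I`, so an element
regular modulo `I` is regular modulo every power of `I`. By prime avoidance over the finitely many
associated primes of `A / I`, an element of `I⁽ⁿ⁾` is multiplied into `Iⁿ` by an element regular
modulo `I`, hence lies in `Iⁿ`.
-/

open MvPolynomial

/-- The `n`-th symbolic power of an ideal `I`:
`I^{(n)} = ⋂_{p ∈ Ass(A/I)} (Iⁿ A_p ∩ A)`. -/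
noncomputable def symbolicPower {A : Type*} [CommRing A] (I : Ideal A) (n : ℕ) : Ideal A :=
  ⨅ (p : Ideal A) (hp : p ∈ associatedPrimes A (A ⧸ I)),
    haveI : p.IsPrime := hp.isPrime
    Ideal.comap (algebraMap A (Localization.AtPrime p))
      (Ideal.map (algebraMap A (Localization.AtPrime p)) (I ^ n))

/-- The component `(y₁ - g(x₁), …, y_d - g(x_d))` of the Derksen ideal, in
`S = K[x₁, …, x_d, y₁, …, y_d]`, where the `x`-variables are indexed by `Sum.inl`
and the `y`-variables by `Sum.inr`. -/
noncomputable def derksenComponent (K : Type*) [Field K] (d : ℕ) {G : Type*} [Group G]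
    [MulSemiringAction G (MvPolynomial (Fin d) K)] (g : G) :
    Ideal (MvPolynomial (Fin d ⊕ Fin d) K) :=
  Ideal.span (Set.range fun i : Fin d =>
    X (Sum.inr i) - rename Sum.inl (g • (X i : MvPolynomial (Fin d) K)))

/-- The Derksen ideal `I_G = ⋂_{g ∈ G} (y₁ - g(x₁), …, y_d - g(x_d))`. -/
noncomputable def derksenIdeal (K : Type*) [Field K] (d : ℕ) (G : Type*) [Group G]
    [MulSemiringAction G (MvPolynomial (Fin d) K)] :
    Ideal (MvPolynomial (Fin d ⊕ Fin d) K) :=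
  ⨅ g : G, derksenComponent K d g

section PowersOfIdeals

variable {A : Type*} [CommRing A]

lemma sup_pow_succ_eq (J F : Ideal A) (m : ℕ) :
    (J ⊔ F) ^ (m + 1) = J ^ (m + 1) ⊔ F * (J ⊔ F) ^ m := by
  induction m with
  | zero => simp
  | succ m ih =>
    have mixed_le : J * (F * (J ⊔ F) ^ m) ≤ F * (J ⊔ F) ^ (m + 1) := by
      rw [mul_left_comm, pow_succ']
      exact Ideal.mul_mono_right (Ideal.mul_mono_left le_sup_left)
    calc (J ⊔ F) ^ (m + 1 + 1)
        = J * (J ⊔ F) ^ (m + 1) ⊔ F * (J ⊔ F) ^ (m + 1) := by rw [pow_succ', Ideal.sup_mul]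
      _ = J ^ (m + 1 + 1) ⊔ (J * (F * (J ⊔ F) ^ m) ⊔ F * (J ⊔ F) ^ (m + 1)) := by
        nth_rw 1 [ih]
        rw [Ideal.mul_sup, ← pow_succ', sup_assoc]
      _ = J ^ (m + 1 + 1) ⊔ F * (J ⊔ F) ^ (m + 1) := by rw [sup_eq_right.2 mixed_le]

lemma exists_add_mul_of_mem_mul_sup_span_singleton_pow {P J : Ideal A} {f a : A} {m : ℕ}
    (ha : a ∈ P * (J ⊔ Ideal.span {f}) ^ (m + 1)) :
    ∃ b ∈ P * J ^ (m + 1), ∃ c ∈ P * (J ⊔ Ideal.span {f}) ^ m, b + f * c = a := by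
  rw [sup_pow_succ_eq, Ideal.mul_sup, mul_left_comm] at ha
  obtain ⟨b, hb, _, hfc, rfl⟩ := Submodule.mem_sup.1 ha
  obtain ⟨c, hc, rfl⟩ := Ideal.mem_span_singleton_mul.1 hfc
  exact ⟨b, hb, c, hc, rfl⟩

/-- Regularity of an element passes from `A ⧸ Q` to `Jᵐ ⧸ QJᵐ` for every `m` and every ideal
`Q ⊇ J`. This is the consequence of the freeness of `Jᵐ ⧸ Jᵐ⁺¹` over `A ⧸ J` that controls zero
divisors modulo powers of `J`; it is stated on elements of `A`. -/
def RegularOnPowers (J : Ideal A) : Prop :=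
  ∀ ⦃Q : Ideal A⦄, J ≤ Q → ∀ ⦃u : A⦄, IsSMulRegular (A ⧸ Q) u →
    ∀ (m : ℕ), ∀ a ∈ J ^ m, u * a ∈ Q * J ^ m → a ∈ Q * J ^ m

namespace RegularOnPowers

variable {J : Ideal A}

lemma isSMulRegular_quotient_pow (hJ : RegularOnPowers J) {u : A}
    (hu : IsSMulRegular (A ⧸ J) u) (m : ℕ) : IsSMulRegular (A ⧸ J ^ m) u := by
  rw [isSMulRegular_quotient_iff_mem_of_smul_mem]
  induction m with
  | zero => simp
  | succ m ih =>
    intro a hua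
    rw [pow_succ'] at hua ⊢
    exact hJ le_rfl hu m a (ih a (Ideal.mul_le_right hua)) hua

lemma bot : RegularOnPowers (⊥ : Ideal A) := by
  intro Q _ u hu m a ha hua
  cases m with
  | zero =>
    rw [pow_zero, mul_one] at hua ⊢
    exact mem_of_isSMulRegular_quotient_of_smul_mem hu hua
  | succ m =>
    rw [Submodule.bot_pow m.succ_ne_zero, Ideal.mem_bot] at ha
    exact ha ▸ zero_mem _

lemma sup_span_singleton (hJ : RegularOnPowers J) {f : A} (hf : IsSMulRegular (A ⧸ J) f) :
    RegularOnPowers (J ⊔ Ideal.span {f}) := by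
  intro Q hQ u hu m
  obtain ⟨hJQ, hfQ⟩ := sup_le_iff.1 hQ
  rw [Ideal.span_singleton_le_iff_mem] at hfQ
  have hfI : f ∈ J ⊔ Ideal.span {f} := Ideal.mem_sup_right (Ideal.mem_span_singleton_self f)
  induction m with
  | zero =>
    intro a _ hua
    rw [pow_zero, mul_one] at hua ⊢
    exact mem_of_isSMulRegular_quotient_of_smul_mem hu hua
  | succ m ih =>
    intro a ha hua
    rw [← one_mul (_ ^ _)] at ha
    obtain ⟨b, hb, c, hc, rfl⟩ := exists_add_mul_of_mem_mul_sup_span_singleton_pow ha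
    obtain ⟨p, hp, q, hq, hpq⟩ := exists_add_mul_of_mem_mul_sup_span_singleton_pow hua
    rw [one_mul] at hb hc
    -- Both `p` and `u * b` lie in `Jᵐ⁺¹`, modulo which `f` is regular.
    have h_diff : u * c - q ∈ J ^ (m + 1) := by
      refine mem_of_isSMulRegular_quotient_of_smul_mem (hJ.isSMulRegular_quotient_pow hf _) ?_
      have : f • (u * c - q) = p - u * b := by
        rw [smul_eq_mul]
        linear_combination -hpq
      exact this ▸ sub_mem (Ideal.mul_le_right hp) (Ideal.mul_mem_left _ u hb)
    have hcQ : c ∈ Q * (J ⊔ Ideal.span {f}) ^ m := by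
      have hle : J ^ (m + 1) ≤ Q * (J ⊔ Ideal.span {f}) ^ m :=
        pow_succ' J m ▸ Ideal.mul_mono hJQ (Ideal.pow_right_mono le_sup_left m)
      exact ih c hc (sub_add_cancel (u * c) q ▸ add_mem (hle h_diff) hq)
    have hbQ : b ∈ Q * J ^ (m + 1) := by
      refine hJ hJQ hu (m + 1) b hb ?_
      have : u * b = p - f * (u * c - q) := by linear_combination -hpq
      exact this ▸ sub_mem hp (Ideal.mul_mem_mul hfQ h_diff)
    refine add_mem (Ideal.mul_mono_right (Ideal.pow_right_mono le_sup_left _) hbQ) ?_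
    rw [pow_succ', mul_left_comm]
    exact Ideal.mul_mem_mul hfI hcQ

end RegularOnPowers

lemma regularOnPowers_ofList {rs : List A} (h : RingTheory.Sequence.IsWeaklyRegular A rs) :
    RegularOnPowers (Ideal.ofList rs) := by
  induction rs using List.reverseRecOn with
  | nil => exact Ideal.ofList_nil (R := A) ▸ RegularOnPowers.bot
  | append_singleton rs f ih =>
    rw [RingTheory.Sequence.isWeaklyRegular_append_iff,
      RingTheory.Sequence.isWeaklyRegular_singleton_iff, smul_eq_mul, Ideal.mul_top] at h
    rw [Ideal.ofList_append, Ideal.ofList_singleton]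
    exact (ih h.1).sup_span_singleton h.2

end PowersOfIdeals

section SymbolicPower

variable {A : Type*} [CommRing A]

lemma pow_le_symbolicPower (I : Ideal A) (n : ℕ) : I ^ n ≤ symbolicPower I n :=
  le_iInf₂ fun _ _ => Ideal.le_comap_map

lemma exists_notMem_mul_mem_pow_of_mem_symbolicPower {I : Ideal A} {n : ℕ} {a : A}
    (ha : a ∈ symbolicPower I n) {p : Ideal A} (hp : p ∈ associatedPrimes A (A ⧸ I)) :
    ∃ u ∉ p, u * a ∈ I ^ n := by
  have := hp.isPrime
  simp only [symbolicPower, Submodule.mem_iInf] at ha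
  exact (IsLocalization.algebraMap_mem_map_algebraMap_iff p.primeCompl
    (Localization.AtPrime p) _ _).1 (ha p hp)

lemma exists_isSMulRegular_mul_mem_pow_of_mem_symbolicPower [IsNoetherianRing A] {I : Ideal A}
    {n : ℕ} {a : A} (ha : a ∈ symbolicPower I n) :
    ∃ u, IsSMulRegular (A ⧸ I) u ∧ u * a ∈ I ^ n := by
  have not_subset : ¬ (((I ^ n).colon {a} : Ideal A) : Set A) ⊆
      ⋃ p ∈ associatedPrimes A (A ⧸ I), (p : Set A) := by
    intro hsub
    obtain ⟨p, hp, hle⟩ := (Ideal.subset_union_prime_finite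
      (associatedPrimes.finite A (A ⧸ I)) ⊥ ⊥ fun p hp _ _ => hp.isPrime).1 hsub
    obtain ⟨u, hup, hua⟩ := exists_notMem_mul_mem_pow_of_mem_symbolicPower ha hp
    exact hup (hle (Submodule.mem_colon_singleton.2 hua))
  rw [biUnion_associatedPrimes_eq_compl_regular, Set.not_subset] at not_subset
  obtain ⟨u, hua, hu⟩ := not_subset
  exact ⟨u, not_not.1 hu, Submodule.mem_colon_singleton.1 hua⟩

theorem symbolicPower_eq_pow_of_regularOnPowers [IsNoetherianRing A] {I : Ideal A}
    (hI : RegularOnPowers I) (n : ℕ) : symbolicPower I n = I ^ n := by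
  refine le_antisymm (fun a ha => ?_) (pow_le_symbolicPower I n)
  obtain ⟨u, hu, hua⟩ := exists_isSMulRegular_mul_mem_pow_of_mem_symbolicPower ha
  exact mem_of_isSMulRegular_quotient_of_smul_mem (hI.isSMulRegular_quotient_pow hu n) hua

end SymbolicPower

section IntersectionsOfIdeals

variable {A : Type*} [CommRing A]

lemma isSMulRegular_quotient_iInf {κ : Sort*} {I : κ → Ideal A} {u : A}
    (h : ∀ k, IsSMulRegular (A ⧸ I k) u) : IsSMulRegular (A ⧸ ⨅ k, I k) u := by
  rw [isSMulRegular_quotient_iff_mem_of_smul_mem]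
  simp only [Submodule.mem_iInf]
  exact fun a hua k => mem_of_isSMulRegular_quotient_of_smul_mem (h k) (hua k)

lemma isSMulRegular_quotient_comap {B : Type*} [CommRing B] (φ : A →+* B) {J : Ideal B} {u : A}
    (h : IsSMulRegular (B ⧸ J) (φ u)) : IsSMulRegular (A ⧸ J.comap φ) u := by
  rw [isSMulRegular_quotient_iff_mem_of_smul_mem]
  intro a hua
  rw [Ideal.mem_comap, smul_eq_mul, map_mul] at hua
  exact Ideal.mem_comap.2 (mem_of_isSMulRegular_quotient_of_smul_mem h hua)

lemma isSMulRegular_quotient_ker {B : Type*} [CommRing B] [NoZeroDivisors B] (φ : A →+* B) {u : A}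
    (h : φ u ≠ 0) : IsSMulRegular (A ⧸ RingHom.ker φ) u := by
  rw [isSMulRegular_quotient_iff_mem_of_smul_mem]
  intro a hua
  rw [RingHom.mem_ker, smul_eq_mul, map_mul] at hua
  exact (mul_eq_zero.1 hua).resolve_left h

lemma sup_ker_eq_comap_of_idempotent {φ : A →+* A} (hφ : ∀ a, φ (φ a) = φ a) {J : Ideal A}
    (hJ : J ≤ J.comap φ) : J ⊔ RingHom.ker φ = J.comap φ := by
  refine le_antisymm (sup_le hJ (Ideal.comap_mono bot_le)) fun a ha => ?_
  rw [← add_sub_cancel (φ a) a]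
  exact Submodule.add_mem_sup ha (by rw [RingHom.mem_ker, map_sub, hφ, sub_self])

lemma sup_span_singleton_inf_sup_span_singleton {J : Ideal A} {g h : A}
    (hgh : IsSMulRegular (A ⧸ (J ⊔ Ideal.span {h})) g) :
    (J ⊔ Ideal.span {g}) ⊓ (J ⊔ Ideal.span {h}) = J ⊔ Ideal.span {g * h} := by
  apply le_antisymm
  · rintro _ ⟨hg, hh⟩
    obtain ⟨a, ha, _, hgb, rfl⟩ := Submodule.mem_sup.1 hg
    obtain ⟨b, rfl⟩ := Ideal.mem_span_singleton'.1 hgb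
    have hb : b ∈ J ⊔ Ideal.span {h} := by
      refine mem_of_isSMulRegular_quotient_of_smul_mem hgh ?_
      rwa [SetLike.mem_coe, add_mem_cancel_left (Ideal.mem_sup_left ha), mul_comm] at hh
    obtain ⟨c, hc, _, hhe, rfl⟩ := Submodule.mem_sup.1 hb
    obtain ⟨e, rfl⟩ := Ideal.mem_span_singleton'.1 hhe
    have : a + (c + e * h) * g = (a + c * g) + e * (g * h) := by ring
    rw [this]
    exact Submodule.add_mem_sup (add_mem ha (J.mul_mem_right g hc))
      (Ideal.mem_span_singleton'.2 ⟨e, rfl⟩)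
  · refine le_inf ?_ ?_ <;> refine sup_le_sup_left (Ideal.span_singleton_le_span_singleton.2 ?_) J
    exacts [dvd_mul_right g h, dvd_mul_left h g]

lemma iInf_sup_span_singleton {κ : Type*} {J : Ideal A} (s : Finset κ) {g : κ → A}
    (hg : (s : Set κ).Pairwise fun k l => IsSMulRegular (A ⧸ (J ⊔ Ideal.span {g k})) (g l)) :
    ⨅ k ∈ s, J ⊔ Ideal.span {g k} = J ⊔ Ideal.span {∏ k ∈ s, g k} := by
  classical
  induction s using Finset.induction_on with
  | empty => simp
  | insert k s hk ih =>
    rw [Finset.coe_insert, Set.pairwise_insert_of_notMem hk] at hg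
    have hreg : IsSMulRegular (A ⧸ (J ⊔ Ideal.span {∏ l ∈ s, g l})) (g k) := by
      rw [← ih hg.1]
      exact isSMulRegular_quotient_iInf fun l => isSMulRegular_quotient_iInf fun hl =>
        (hg.2 l hl).2
    rw [Finset.iInf_insert, ih hg.1, Finset.prod_insert hk,
      sup_span_singleton_inf_sup_span_singleton hreg]

end IntersectionsOfIdeals

section DiagonalSubstitution

variable {K ι : Type*} [CommRing K]

/-- The linear form `yᵢ - η xᵢ`; as in `derksenComponent`, `Sum.inl` indexes the variables `x` and
`Sum.inr` the variables `y`. -/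
noncomputable def linearForm (i : ι) (η : K) : MvPolynomial (ι ⊕ ι) K :=
  X (Sum.inr i) - C η * X (Sum.inl i)

lemma linearForm_ne_zero [Nontrivial K] (i : ι) (η : K) : linearForm i η ≠ 0 := by
  intro h
  simpa [linearForm] using congrArg (eval (Sum.elim (fun _ => (0 : K)) fun _ => 1)) h

variable [DecidableEq ι]

/-- The substitution `yᵢ ↦ ζᵢ xᵢ` for `i ∈ s`, fixing all other variables. Its kernel is the linear
ideal `(yᵢ - ζᵢ xᵢ : i ∈ s)`, see `ker_diagonalSubst`. -/
noncomputable def diagonalSubst (s : Finset ι) (ζ : ι → K) :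
    MvPolynomial (ι ⊕ ι) K →ₐ[K] MvPolynomial (ι ⊕ ι) K :=
  aeval (Sum.elim (fun i => X (Sum.inl i))
    fun i => if i ∈ s then C (ζ i) * X (Sum.inl i) else X (Sum.inr i))

@[simp]
lemma diagonalSubst_X_inl (s : Finset ι) (ζ : ι → K) (i : ι) :
    diagonalSubst s ζ (X (Sum.inl i)) = X (Sum.inl i) := by
  simp [diagonalSubst]

@[simp]
lemma diagonalSubst_X_inr (s : Finset ι) (ζ : ι → K) (i : ι) :
    diagonalSubst s ζ (X (Sum.inr i)) =
      if i ∈ s then C (ζ i) * X (Sum.inl i) else X (Sum.inr i) := by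
  simp [diagonalSubst]

lemma diagonalSubst_linearForm_of_mem {s : Finset ι} {i : ι} (hi : i ∈ s) (ζ : ι → K) (η : K) :
    diagonalSubst s ζ (linearForm i η) = C (ζ i - η) * X (Sum.inl i) := by
  simp [linearForm, hi, sub_mul]

lemma diagonalSubst_linearForm_of_notMem {s : Finset ι} {i : ι} (hi : i ∉ s) (ζ : ι → K) (η : K) :
    diagonalSubst s ζ (linearForm i η) = linearForm i η := by
  simp [linearForm, hi]

lemma sub_diagonalSubst_mem_span (s : Finset ι) (ζ : ι → K) (f : MvPolynomial (ι ⊕ ι) K) :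
    f - diagonalSubst s ζ f ∈ Ideal.span ((fun i => linearForm i (ζ i)) '' s) := by
  set I := Ideal.span ((fun i => linearForm i (ζ i)) '' (s : Set ι))
  have : (Ideal.Quotient.mkₐ K I).comp (diagonalSubst s ζ) = Ideal.Quotient.mkₐ K I := by
    refine algHom_ext fun v => (Ideal.Quotient.mk_eq_mk_iff_sub_mem _ _).2 ?_
    rcases v with i | i
    · simp
    · by_cases hi : i ∈ s
      · rw [← neg_mem_iff, neg_sub]
        simpa [I, linearForm, hi] using
          Ideal.subset_span (Set.mem_image_of_mem (fun i => linearForm i (ζ i)) hi)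
      · simp [hi]
  exact (Ideal.Quotient.mk_eq_mk_iff_sub_mem _ _).1 (DFunLike.congr_fun this f).symm

lemma ker_diagonalSubst (s : Finset ι) (ζ : ι → K) :
    RingHom.ker (diagonalSubst s ζ) = Ideal.span ((fun i => linearForm i (ζ i)) '' s) := by
  apply le_antisymm
  · intro f hf
    simpa only [(RingHom.mem_ker).1 hf, sub_zero] using sub_diagonalSubst_mem_span s ζ f
  · rw [Ideal.span_le]
    rintro _ ⟨i, hi, rfl⟩
    simp [diagonalSubst_linearForm_of_mem (Finset.mem_coe.1 hi)]

lemma ker_diagonalSubst_singleton (j : ι) (η : K) :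
    RingHom.ker (diagonalSubst {j} fun _ => η) = Ideal.span {linearForm j η} := by
  simp [ker_diagonalSubst]

lemma diagonalSubst_idempotent (s : Finset ι) (ζ : ι → K) (f : MvPolynomial (ι ⊕ ι) K) :
    diagonalSubst s ζ (diagonalSubst s ζ f) = diagonalSubst s ζ f := by
  have hf := sub_diagonalSubst_mem_span s ζ f
  rw [← ker_diagonalSubst, RingHom.mem_ker, map_sub, sub_eq_zero] at hf
  exact hf.symm

lemma diagonalSubst_insert (s : Finset ι) (j : ι) (ζ : ι → K) :
    diagonalSubst (insert j s) ζ = (diagonalSubst s ζ).comp (diagonalSubst {j} fun _ => ζ j) := by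
  refine algHom_ext fun v => ?_
  rcases v with i | i
  · simp
  · rcases eq_or_ne i j with rfl | hij
    · simp
    · simp [hij]

lemma diagonalSubst_comp_singleton_comm {s : Finset ι} {j : ι} (hj : j ∉ s) (ζ : ι → K) (η : K) :
    (diagonalSubst s ζ).comp (diagonalSubst {j} fun _ => η) =
      (diagonalSubst {j} fun _ => η).comp (diagonalSubst s ζ) := by
  refine algHom_ext fun v => ?_
  rcases v with i | i
  · simp
  · rcases eq_or_ne i j with rfl | hij
    · simp [hj]
    · by_cases hi : i ∈ s <;> simp [hij, hi]

lemma diagonalSubst_congr {s : Finset ι} {ζ ξ : ι → K} (h : ∀ i ∈ s, ζ i = ξ i) :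
    diagonalSubst s ζ = diagonalSubst s ξ := by
  unfold diagonalSubst
  congr 2
  ext1 i
  exact if_ctx_congr Iff.rfl (fun hi => by rw [h i hi]) fun _ => rfl

end DiagonalSubstitution

section BoxIdeal

variable {K ι : Type*} [CommRing K] [DecidableEq ι]

/-- The intersection of the linear ideals `(yᵢ - ζᵢ xᵢ : i ∈ s)`, written as kernels of
substitutions, over all points `ζ` of the box `∏ᵢ Zᵢ`. -/
noncomputable def boxIdeal (s : Finset ι) (Z : ι → Set K) : Ideal (MvPolynomial (ι ⊕ ι) K) :=
  ⨅ ζ ∈ (s : Set ι).pi Z, RingHom.ker (diagonalSubst s ζ)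

lemma mem_boxIdeal {s : Finset ι} {Z : ι → Set K} {f : MvPolynomial (ι ⊕ ι) K} :
    f ∈ boxIdeal s Z ↔ ∀ ζ ∈ (s : Set ι).pi Z, diagonalSubst s ζ f = 0 := by
  simp only [boxIdeal, Submodule.mem_iInf, RingHom.mem_ker]

lemma boxIdeal_empty (Z : ι → Set K) : boxIdeal ∅ Z = ⊥ := by
  ext f
  have : diagonalSubst ∅ = fun _ : ι → K => AlgHom.id K (MvPolynomial (ι ⊕ ι) K) := by
    ext1 ζ
    refine algHom_ext fun v => ?_
    rcases v with i | i <;> simp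
  simp [mem_boxIdeal, this]

lemma boxIdeal_insert {s : Finset ι} {j : ι} (hj : j ∉ s) (Z : ι → Set K) :
    boxIdeal (insert j s) Z =
      ⨅ η ∈ Z j, (boxIdeal s Z).comap (diagonalSubst {j} fun _ => η) := by
  ext f
  simp only [Submodule.mem_iInf, Ideal.mem_comap, mem_boxIdeal, Finset.coe_insert,
    Set.insert_pi, diagonalSubst_insert, AlgHom.comp_apply]
  constructor
  · intro h η hη ζ hζ
    have hagree : ∀ i ∈ s, Function.update ζ j η i = ζ i := fun i hi =>
      Function.update_of_ne (ne_of_mem_of_not_mem hi hj) _ _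
    have hmem : Function.update ζ j η ∈ (s : Set ι).pi Z := fun i hi =>
      (hagree i hi).symm ▸ hζ i hi
    simpa [diagonalSubst_congr hagree] using
      h (Function.update ζ j η) ⟨by simpa using hη, hmem⟩
  · exact fun h ζ hζ => h (ζ j) hζ.1 ζ hζ.2

lemma boxIdeal_sup_span_linearForm {s : Finset ι} {j : ι} (hj : j ∉ s) (Z : ι → Set K) (η : K) :
    boxIdeal s Z ⊔ Ideal.span {linearForm j η} =
      (boxIdeal s Z).comap (diagonalSubst {j} fun _ => η) := by
  rw [← ker_diagonalSubst_singleton]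
  refine sup_ker_eq_comap_of_idempotent (φ := (diagonalSubst {j} fun _ => η).toRingHom)
    (diagonalSubst_idempotent {j} fun _ => η) fun f hf => mem_boxIdeal.2 fun ζ hζ => ?_
  have hcomm := DFunLike.congr_fun (diagonalSubst_comp_singleton_comm hj ζ η) f
  rw [AlgHom.comp_apply, AlgHom.comp_apply, mem_boxIdeal.1 hf ζ hζ, map_zero] at hcomm
  exact hcomm

variable [IsDomain K]

lemma isSMulRegular_quotient_boxIdeal {s : Finset ι} {Z : ι → Set K}
    {u : MvPolynomial (ι ⊕ ι) K} (hu : ∀ ζ ∈ (s : Set ι).pi Z, diagonalSubst s ζ u ≠ 0) :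
    IsSMulRegular (MvPolynomial (ι ⊕ ι) K ⧸ boxIdeal s Z) u :=
  isSMulRegular_quotient_iInf fun ζ => isSMulRegular_quotient_iInf fun hζ =>
    isSMulRegular_quotient_ker (diagonalSubst s ζ).toRingHom (hu ζ hζ)

lemma isSMulRegular_linearForm_of_ne {s : Finset ι} {j : ι} (hj : j ∉ s) (Z : ι → Set K)
    {η η' : K} (h : η ≠ η') :
    IsSMulRegular (MvPolynomial (ι ⊕ ι) K ⧸ (boxIdeal s Z ⊔ Ideal.span {linearForm j η}))
      (linearForm j η') := by
  rw [boxIdeal_sup_span_linearForm hj]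
  refine isSMulRegular_quotient_comap (diagonalSubst {j} fun _ => η).toRingHom
    (isSMulRegular_quotient_boxIdeal fun ζ _ => ?_)
  have : diagonalSubst {j} (fun _ => η) (linearForm j η') = C (η - η') * X (Sum.inl j) :=
    diagonalSubst_linearForm_of_mem (Finset.mem_singleton_self j) _ _
  change diagonalSubst s ζ (diagonalSubst {j} (fun _ => η) (linearForm j η')) ≠ 0
  rw [this, map_mul, algHom_C, algebraMap_eq, diagonalSubst_X_inl]
  exact mul_ne_zero (C_ne_zero.2 (sub_ne_zero.2 h)) (X_ne_zero _)

lemma boxIdeal_insert_eq_sup_span_prod {s : Finset ι} {j : ι} (hj : j ∉ s) (Z : ι → Finset K) :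
    boxIdeal (insert j s) (fun i => (Z i : Set K)) =
      boxIdeal s (fun i => (Z i : Set K)) ⊔ Ideal.span {∏ η ∈ Z j, linearForm j η} := by
  rw [boxIdeal_insert hj, ← iInf_sup_span_singleton (Z j) fun η _ η' _ hne =>
    isSMulRegular_linearForm_of_ne hj _ hne]
  simp only [boxIdeal_sup_span_linearForm hj, Finset.mem_coe]

lemma ofList_prod_linearForm_eq_boxIdeal (Z : ι → Finset K) {l : List ι} (hl : l.Nodup) :
    Ideal.ofList (l.map fun i => ∏ η ∈ Z i, linearForm i η) =
      boxIdeal l.toFinset fun i => (Z i : Set K) := by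
  induction l with
  | nil => simp [boxIdeal_empty]
  | cons j l ih =>
    rw [List.nodup_cons] at hl
    rw [List.map_cons, Ideal.ofList_cons, ih hl.2, List.toFinset_cons,
      boxIdeal_insert_eq_sup_span_prod (mt List.mem_toFinset.1 hl.1), sup_comm]

omit [DecidableEq ι] in
lemma isWeaklyRegular_prod_linearForm (Z : ι → Finset K) {l : List ι} (hl : l.Nodup) :
    RingTheory.Sequence.IsWeaklyRegular (MvPolynomial (ι ⊕ ι) K)
      (l.map fun i => ∏ η ∈ Z i, linearForm i η) := by
  classical
  induction l using List.reverseRecOn with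
  | nil => exact .nil _ _
  | append_singleton l j ih =>
    rw [← List.concat_eq_append, List.nodup_concat] at hl
    rw [List.map_append, List.map_singleton, RingTheory.Sequence.isWeaklyRegular_append_iff,
      RingTheory.Sequence.isWeaklyRegular_singleton_iff, smul_eq_mul, Ideal.mul_top,
      ofList_prod_linearForm_eq_boxIdeal Z hl.2]
    refine ⟨ih hl.2, isSMulRegular_quotient_boxIdeal fun ζ _ => ?_⟩
    rw [map_prod, Finset.prod_ne_zero_iff]
    intro η _
    rw [diagonalSubst_linearForm_of_notMem (mt List.mem_toFinset.1 hl.1)]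
    exact linearForm_ne_zero j η

theorem symbolicPower_boxIdeal [IsNoetherianRing K] [Finite ι] (s : Finset ι) (Z : ι → Finset K)
    (n : ℕ) :
    symbolicPower (boxIdeal s fun i => (Z i : Set K)) n =
      (boxIdeal s fun i => (Z i : Set K)) ^ n := by
  rw [← s.toList_toFinset, ← ofList_prod_linearForm_eq_boxIdeal Z s.nodup_toList]
  exact symbolicPower_eq_pow_of_regularOnPowers
    (regularOnPowers_ofList (isWeaklyRegular_prod_linearForm Z s.nodup_toList)) n

end BoxIdeal

lemma coe_closure_range_mulSingle {ι κ : Type*} [Finite ι] [DecidableEq ι] {M : ι → Type*}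
    [∀ i, MulOneClass (M i)] (σ : κ → ι) (ω : ∀ k, M (σ k)) :
    (Submonoid.closure (Set.range fun k => Pi.mulSingle (σ k) (ω k)) : Set (∀ i, M i)) =
      Set.univ.pi fun i =>
        Function.eval i '' Submonoid.closure (Set.range fun k => Pi.mulSingle (σ k) (ω k)) := by
  set H := Submonoid.closure (Set.range fun k => Pi.mulSingle (M := M) (σ k) (ω k))
  have mulSingle_mem (i : ι) :
      H ≤ H.comap ((MonoidHom.mulSingle M i).comp (Pi.evalMonoidHom M i)) := by
    refine Submonoid.closure_le.2 ?_
    rintro _ ⟨k, rfl⟩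
    change Pi.mulSingle i (Pi.mulSingle (σ k) (ω k) i) ∈ H
    rcases eq_or_ne i (σ k) with rfl | hi
    · rw [Pi.mulSingle_eq_same]
      exact Submonoid.subset_closure ⟨k, rfl⟩
    · rw [Pi.mulSingle_eq_of_ne hi, Pi.mulSingle_one]
      exact H.one_mem
  refine Set.Subset.antisymm (Set.subset_pi_eval_image _ _) fun ζ hζ => ?_
  refine Submonoid.pi_mem_of_mulSingle_mem ζ fun i => ?_
  obtain ⟨ξ, hξ, hξζ⟩ := hζ i trivial
  exact hξζ ▸ mulSingle_mem i hξ

section DiagonalAction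

variable {K ι G : Type*} [CommSemiring K] [Monoid G] [MulSemiringAction G (MvPolynomial ι K)]

/-- The element `g` acts on the variables through the diagonal matrix `ζ`. -/
def ActsDiagonally (g : G) (ζ : ι → K) : Prop :=
  ∀ j, g • (X j : MvPolynomial ι K) = C (ζ j) * X j

namespace ActsDiagonally

lemma one : ActsDiagonally (1 : G) (1 : ι → K) := fun j => by simp

lemma mul (hC : ∀ (g : G) (c : K), g • (C c : MvPolynomial ι K) = C c) {g h : G} {ζ ξ : ι → K}
    (hg : ActsDiagonally g ζ) (hh : ActsDiagonally h ξ) : ActsDiagonally (g * h) (ζ * ξ) :=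
  fun j => by
    rw [mul_smul, hh, smul_mul', hC, hg, ← mul_assoc, ← C_mul, mul_comm (ξ j), Pi.mul_apply]

lemma unique {g : G} {ζ ξ : ι → K} (hζ : ActsDiagonally g ζ) (hξ : ActsDiagonally g ξ) :
    ζ = ξ := by
  ext1 j
  simpa [coeff_C_mul] using congrArg (coeff (Finsupp.single j 1)) ((hζ j).symm.trans (hξ j))

variable {κ : Type*} {gen : κ → G} {ξ : κ → ι → K}

lemma exists_of_mem_closure_matrices
    (hC : ∀ (g : G) (c : K), g • (C c : MvPolynomial ι K) = C c)
    (hgen : ∀ k, ActsDiagonally (gen k) (ξ k)) {ζ : ι → K}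
    (hζ : ζ ∈ Submonoid.closure (Set.range ξ)) : ∃ g : G, ActsDiagonally g ζ := by
  induction hζ using Submonoid.closure_induction with
  | mem _ h =>
    obtain ⟨k, rfl⟩ := h
    exact ⟨gen k, hgen k⟩
  | one => exact ⟨1, one⟩
  | mul _ _ _ _ h₁ h₂ =>
    obtain ⟨g₁, hg₁⟩ := h₁
    obtain ⟨g₂, hg₂⟩ := h₂
    exact ⟨g₁ * g₂, hg₁.mul hC hg₂⟩

lemma exists_mem_closure_matrices
    (hC : ∀ (g : G) (c : K), g • (C c : MvPolynomial ι K) = C c)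
    (hgen : ∀ k, ActsDiagonally (gen k) (ξ k)) {g : G}
    (hg : g ∈ Submonoid.closure (Set.range gen)) :
    ∃ ζ ∈ Submonoid.closure (Set.range ξ), ActsDiagonally g ζ := by
  induction hg using Submonoid.closure_induction with
  | mem _ h =>
    obtain ⟨k, rfl⟩ := h
    exact ⟨ξ k, Submonoid.subset_closure ⟨k, rfl⟩, hgen k⟩
  | one => exact ⟨1, one_mem _, one⟩
  | mul _ _ _ _ h₁ h₂ =>
    obtain ⟨ζ₁, hζ₁, hg₁⟩ := h₁
    obtain ⟨ζ₂, hζ₂, hg₂⟩ := h₂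
    exact ⟨ζ₁ * ζ₂, mul_mem hζ₁ hζ₂, hg₁.mul hC hg₂⟩

lemma finite_setOf_exists [Finite G] : {ζ : ι → K | ∃ g : G, ActsDiagonally g ζ}.Finite := by
  rw [Set.ofPred_exists]
  exact Set.finite_iUnion fun g => Set.Subsingleton.finite fun ζ hζ ξ hξ => unique hζ hξ

end ActsDiagonally

end DiagonalAction

section DerksenIdeal

variable {K : Type*} [Field K] {d : ℕ} {G : Type*} [Group G]
  [MulSemiringAction G (MvPolynomial (Fin d) K)]

lemma derksenComponent_eq_ker {g : G} {ζ : Fin d → K} (hg : ActsDiagonally g ζ) :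
    derksenComponent K d g = RingHom.ker (diagonalSubst Finset.univ ζ) := by
  simp only [derksenComponent, ker_diagonalSubst, Finset.coe_univ, Set.image_univ, hg _, map_mul,
    rename_C, rename_X, linearForm]

lemma derksenIdeal_eq_boxIdeal {Z : Fin d → Set K}
    (exists_matrix : ∀ g : G, ∃ ζ ∈ Set.univ.pi Z, ActsDiagonally g ζ)
    (exists_element : ∀ ζ ∈ Set.univ.pi Z, ∃ g : G, ActsDiagonally g ζ) :
    derksenIdeal K d G = boxIdeal Finset.univ Z := by
  rw [derksenIdeal, boxIdeal, Finset.coe_univ]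
  refine le_antisymm (le_iInf₂ fun ζ hζ => ?_) (le_iInf fun g => ?_)
  · obtain ⟨g, hg⟩ := exists_element ζ hζ
    exact derksenComponent_eq_ker hg ▸ iInf_le _ g
  · obtain ⟨ζ, hζ, hg⟩ := exists_matrix g
    exact derksenComponent_eq_ker hg ▸ iInf₂_le ζ hζ

end DerksenIdeal

theorem symbolicPower_derksenIdeal_diagonal_general {K : Type*} [Field K] {d : ℕ}
    {G : Type*} [Group G] [Finite G] [MulSemiringAction G (MvPolynomial (Fin d) K)]
    {κ : Type*} {gen : κ → G} (hgen : Subgroup.closure (Set.range gen) = ⊤)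
    (σ : κ → Fin d) (ω : κ → K)
    (hC : ∀ (g : G) (c : K), g • (C c : MvPolynomial (Fin d) K) = C c)
    (hact : ∀ k j, gen k • (X j : MvPolynomial (Fin d) K) =
      if j = σ k then C (ω k) * X j else X j)
    (n : ℕ) : symbolicPower (derksenIdeal K d G) n = derksenIdeal K d G ^ n := by
  let ξ (k : κ) : Fin d → K := Pi.mulSingle (σ k) (ω k)
  have hdiag (k : κ) : ActsDiagonally (gen k) (ξ k) := fun j => by
    by_cases hj : j = σ k
    · simp [ξ, hact, hj]
    · simp [ξ, hact, hj]
  let H := Submonoid.closure (Set.range ξ)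
  have hH : ∀ ζ ∈ H, ∃ g : G, ActsDiagonally g ζ :=
    fun ζ => ActsDiagonally.exists_of_mem_closure_matrices hC hdiag
  have hG (g : G) : ∃ ζ ∈ H, ActsDiagonally g ζ := by
    refine ActsDiagonally.exists_mem_closure_matrices hC hdiag ?_
    rw [← Subgroup.closure_toSubmonoid_of_finite, hgen]
    exact Subgroup.mem_top g
  have hfin : (H : Set (Fin d → K)).Finite := ActsDiagonally.finite_setOf_exists.subset hH
  let Z (j : Fin d) : Finset K := (hfin.image (Function.eval j)).toFinset
  have hbox : (H : Set (Fin d → K)) = Set.univ.pi fun j => (Z j : Set K) := by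
    simp only [Z, Set.Finite.coe_toFinset]
    exact coe_closure_range_mulSingle (M := fun _ => K) σ ω
  have hI : derksenIdeal K d G = boxIdeal Finset.univ fun j => (Z j : Set K) := by
    apply derksenIdeal_eq_boxIdeal <;> rw [← hbox]
    exacts [hG, hH]
  rw [hI, symbolicPower_boxIdeal]

/-- For the diagonal action of `G = ⟨g₁, …, g_a⟩` on `K[x₁, …, x_d]`, where
`gᵢ(x_j) = x_j` for `j ≠ i` and `gᵢ(xᵢ) = ωᵢ xᵢ` with `ωᵢ` a primitive `dᵢ`-th root of
unity, the symbolic powers of the Derksen ideal coincide with its ordinary powers. -/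
theorem symbolicPower_derksenIdeal_diagonal {K : Type*} [Field K] [IsAlgClosed K]
    (d a : ℕ) (ha : a ≤ d) (G : Type*) [Group G] [Finite G]
    [MulSemiringAction G (MvPolynomial (Fin d) K)]
    (gen : Fin a → G) (hgen : Subgroup.closure (Set.range gen) = ⊤)
    (di : Fin a → ℕ) (hdi : ∀ i, 1 ≤ di i)
    (ω : Fin a → K) (hω : ∀ i, IsPrimitiveRoot (ω i) (di i))
    (hC : ∀ (g : G) (c : K), g • (C c : MvPolynomial (Fin d) K) = C c)
    (hact : ∀ (i : Fin a) (j : Fin d),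
      gen i • (X j : MvPolynomial (Fin d) K) =
        if j = Fin.castLE ha i then C (ω i) * X j else X j)
    (n : ℕ) (hn : 1 ≤ n) :
    symbolicPower (derksenIdeal K d G) n = derksenIdeal K d G ^ n :=
  symbolicPower_derksenIdeal_diagonal_general hgen (Fin.castLE ha) ω hC hact n
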